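/- Let C_1 = D(x_1, 1) = (x_1^p + 1 − (x_1+1)^p)/p ∈ K_1. There exists σ_1 ∈ Gal(K_2/K_0) such that (σ_1 − 1)x_1 = 1 + ε and (σ_1 − 1)x_2 = C_1 + δ′, where v_2(ε) = p^2·e_0 − p(p−1)·b_1 and v_2(δ′) > 0. -/

import Mathlib

/-- A normalized discrete valuation on a field `K`, recorded as a function
`v : K → ℤ`.  The value of `v` at `0` is irrelevant: all conditions below only
refer to nonzero elements (the convention `v 0 = ∞` being understood). -/
structure IsDiscVal {K : Type*} [Field K] (v : K → ℤ) : Prop where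
  map_one : v 1 = 0
  map_mul : ∀ x y : K, x ≠ 0 → y ≠ 0 → v (x * y) = v x + v y
  min_le_add : ∀ x y : K, x ≠ 0 → y ≠ 0 → x + y ≠ 0 → min (v x) (v y) ≤ v (x + y)
  exists_uniformizer : ∃ π : K, π ≠ 0 ∧ v π = 1

/-- `ValGe v n x` says `n ≤ v x`, with the convention `v 0 = ∞`. -/
def ValGe {K : Type*} [Field K] (v : K → ℤ) (n : ℤ) (x : K) : Prop :=
  x ≠ 0 → n ≤ v x

/-- The Witt vector addition polynomial `(y ^ p + z ^ p - (y + z) ^ p) / p`. -/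
def wittD {K : Type*} [Field K] (p : ℕ) (y z : K) : K :=
  (y ^ p + z ^ p - (y + z) ^ p) / (p : K)

section Valuation

variable {K : Type*} [Field K] {v : K → ℤ}

lemma ValGe.mono {m n : ℤ} {x : K} (h : ValGe v n x) (hmn : m ≤ n) : ValGe v m x :=
  fun hx => hmn.trans (h hx)

lemma valGe_zero (n : ℤ) : ValGe v n 0 := fun h => absurd rfl h

lemma valGe_self (x : K) : ValGe v (v x) x := fun _ => le_rfl

namespace IsDiscVal

lemma map_pow (hv : IsDiscVal v) {x : K} (hx : x ≠ 0) (k : ℕ) : v (x ^ k) = k * v x := by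
  induction k with
  | zero => simp [hv.map_one]
  | succ k ih =>
    rw [pow_succ, hv.map_mul _ _ (pow_ne_zero _ hx) hx, ih]
    push_cast
    ring

lemma map_neg_one (hv : IsDiscVal v) : v (-1) = 0 := by
  have h := hv.map_mul (-1) (-1) (by simp) (by simp)
  rw [neg_one_mul, neg_neg, hv.map_one] at h
  omega

lemma map_neg (hv : IsDiscVal v) (x : K) : v (-x) = v x := by
  by_cases hx : x = 0
  · simp [hx]
  · rw [← neg_one_mul, hv.map_mul _ _ (by simp) hx, hv.map_neg_one, zero_add]

lemma ge_add (hv : IsDiscVal v) {n : ℤ} {x y : K} (hx : ValGe v n x) (hy : ValGe v n y) :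
    ValGe v n (x + y) := by
  intro h
  by_cases hx0 : x = 0
  · subst hx0
    rw [zero_add] at h ⊢
    exact hy h
  by_cases hy0 : y = 0
  · subst hy0
    rw [add_zero] at h ⊢
    exact hx h
  exact (le_min (hx hx0) (hy hy0)).trans (hv.min_le_add x y hx0 hy0 h)

lemma ge_neg (hv : IsDiscVal v) {n : ℤ} {x : K} (hx : ValGe v n x) : ValGe v n (-x) := by
  intro h
  rw [hv.map_neg]
  exact hx (neg_ne_zero.mp h)

lemma ge_sub (hv : IsDiscVal v) {n : ℤ} {x y : K} (hx : ValGe v n x) (hy : ValGe v n y) :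
    ValGe v n (x - y) := by
  rw [sub_eq_add_neg]
  exact hv.ge_add hx (hv.ge_neg hy)

lemma ge_mul (hv : IsDiscVal v) {m n : ℤ} {x y : K} (hx : ValGe v m x) (hy : ValGe v n y) :
    ValGe v (m + n) (x * y) := by
  intro h
  have hx0 := left_ne_zero_of_mul h
  have hy0 := right_ne_zero_of_mul h
  rw [hv.map_mul x y hx0 hy0]
  exact add_le_add (hx hx0) (hy hy0)

lemma ge_one (hv : IsDiscVal v) : ValGe v 0 1 := fun _ => hv.map_one.ge

lemma ge_pow (hv : IsDiscVal v) {n : ℤ} {x : K} (hx : ValGe v n x) (k : ℕ) :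
    ValGe v (k * n) (x ^ k) := by
  induction k with
  | zero => simpa using hv.ge_one
  | succ k ih =>
    rw [pow_succ]
    exact (hv.ge_mul ih hx).mono (by push_cast; linarith)

lemma ge_sum (hv : IsDiscVal v) {ι : Type*} (s : Finset ι) {f : ι → K} {n : ℤ}
    (h : ∀ i ∈ s, ValGe v n (f i)) : ValGe v n (∑ i ∈ s, f i) := by
  classical
  induction s using Finset.induction_on with
  | empty => simpa using valGe_zero n
  | insert a s ha ih =>
    rw [Finset.sum_insert ha]
    exact hv.ge_add (h a (Finset.mem_insert_self a s))
      (ih fun i hi => h i (Finset.mem_insert_of_mem hi))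

lemma ge_natCast (hv : IsDiscVal v) (k : ℕ) : ValGe v 0 (k : K) := by
  induction k with
  | zero => simpa using valGe_zero 0
  | succ k ih =>
    rw [Nat.cast_succ]
    exact hv.ge_add ih hv.ge_one

lemma ge_intCast (hv : IsDiscVal v) (k : ℤ) : ValGe v 0 (k : K) := by
  obtain ⟨n, rfl | rfl⟩ := k.eq_nat_or_neg
  · simpa using hv.ge_natCast n
  · simpa using hv.ge_neg (hv.ge_natCast n)

/-- Adding an element of larger valuation does not change the valuation. -/
lemma add_eq_left (hv : IsDiscVal v) {x y : K} (hx : x ≠ 0) (hy : ValGe v (v x + 1) y) :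
    x + y ≠ 0 ∧ v (x + y) = v x := by
  have hle : ∀ h : ValGe v (v x + 1) (x + y), False := fun h => by
    have h1 := hv.ge_sub h hy
    rw [add_sub_cancel_right] at h1
    linarith [h1 hx]
  have hne : x + y ≠ 0 := fun h => hle (h ▸ valGe_zero _)
  refine ⟨hne, le_antisymm ?_ ?_⟩
  · by_contra! h
    exact hle fun _ => h
  · exact hv.ge_add (valGe_self x) (hy.mono (by linarith)) hne

lemma pow_sub_self (hv : IsDiscVal v) {p : ℕ} (hp : 2 ≤ p) {x : K} (hx : x ≠ 0)
    (hneg : v x < 0) : x ^ p - x ≠ 0 ∧ v (x ^ p - x) = p * v x := by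
  have h2 : (2 : ℤ) ≤ p := by exact_mod_cast hp
  rw [← hv.map_pow hx, sub_eq_add_neg]
  refine hv.add_eq_left (pow_ne_zero p hx) ((hv.ge_neg (valGe_self x)).mono ?_)
  rw [hv.map_pow hx]
  nlinarith

lemma ge_of_pow_sub_self (hv : IsDiscVal v) {p : ℕ} (hp : 2 ≤ p) {x : K} {n : ℤ} (hn : n ≤ 0)
    (h : ValGe v (p * n) (x ^ p - x)) : ValGe v n x := by
  intro hx
  have h2 : (2 : ℤ) ≤ p := by exact_mod_cast hp
  by_contra! hlt
  obtain ⟨hne, heq⟩ := hv.pow_sub_self hp hx (by linarith)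
  have := h hne
  rw [heq] at this
  nlinarith

lemma ge_pow_sub_pow (hv : IsDiscVal v) {d n : ℤ} {y z : K} (hy : ValGe v n y)
    (hz : ValGe v n z) (hd : ValGe v d (y - z)) (k : ℕ) :
    ValGe v (d + k * n) (y ^ (k + 1) - z ^ (k + 1)) := by
  induction k with
  | zero => simpa using hd
  | succ k ih =>
    have h : y ^ (k + 1 + 1) - z ^ (k + 1 + 1) =
        y * (y ^ (k + 1) - z ^ (k + 1)) + (y - z) * z ^ (k + 1) := by ring
    rw [h]
    refine hv.ge_add ((hv.ge_mul hy ih).mono ?_) ((hv.ge_mul hd (hv.ge_pow hz (k + 1))).mono ?_)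
    · push_cast; linarith
    · exact le_rfl

/-- If a product has positive valuation, so does some factor. -/
lemma exists_ge_one_of_prod (hv : IsDiscVal v) {ι : Type*} (s : Finset ι) {f : ι → K}
    (h : ValGe v 1 (∏ i ∈ s, f i)) : ∃ i ∈ s, ValGe v 1 (f i) := by
  classical
  induction s using Finset.induction_on with
  | empty =>
    have := h (by simp)
    simp [hv.map_one] at this
  | insert a s ha ih =>
    rw [Finset.prod_insert ha] at h
    by_cases h1 : ValGe v 1 (f a)
    · exact ⟨a, Finset.mem_insert_self a s, h1⟩
    · obtain ⟨ha0, hlt⟩ : f a ≠ 0 ∧ v (f a) < 1 := by simpa [ValGe] using h1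
      obtain ⟨i, hi, h2⟩ := ih fun hne => by
        have := h (mul_ne_zero ha0 hne)
        rw [hv.map_mul _ _ ha0 hne] at this
        linarith
      exact ⟨i, Finset.mem_insert_of_mem hi, h2⟩

end IsDiscVal

end Valuation

/-- The cocycle identity for `wittD`. -/
lemma wittD_cocycle {K : Type*} [Field K] (p : ℕ) (x y z : K) :
    wittD p x y - wittD p (x + z) y = wittD p x z - wittD p (x + y) z := by
  simp only [wittD, ← sub_div]
  rw [add_right_comm x z y]
  congr 1
  ring

section WittPolynomial

variable {K : Type*} [Field K] [CharZero K] {p : ℕ} {v : K → ℤ}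

lemma wittD_eq_sum (hp : p.Prime) (y z : K) :
    wittD p y z = -∑ i ∈ Finset.Ioo 0 p, y ^ i * z ^ (p - i) * ((p.choose i / p : ℕ) : K) := by
  have hp0 : (p : K) ≠ 0 := Nat.cast_ne_zero.mpr hp.ne_zero
  rw [wittD, (Commute.all y z).add_pow_prime_eq' hp, sub_add_cancel_left, neg_div,
    mul_div_cancel_left₀ _ hp0]

lemma add_pow_eq_wittD (hp : p.Prime) (y z : K) :
    (y + z) ^ p = y ^ p + z ^ p - p * wittD p y z := by
  have hp0 : (p : K) ≠ 0 := Nat.cast_ne_zero.mpr hp.ne_zero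
  rw [wittD]
  field_simp
  ring

lemma int_convex_bound {a b n i q : ℤ} (hi : 1 ≤ i) (hiq : i + 1 ≤ q)
    (h1 : n ≤ a + (q - 1) * b) (h2 : n ≤ (q - 1) * a + b) : n ≤ i * a + (q - i) * b := by
  rcases le_total a b with h | h
  · nlinarith
  · nlinarith

lemma IsDiscVal.ge_wittD (hv : IsDiscVal v) (hp : p.Prime) {a b n : ℤ} {y z : K}
    (hy : ValGe v a y) (hz : ValGe v b z) (h1 : n ≤ a + (p - 1) * b)
    (h2 : n ≤ (p - 1) * a + b) : ValGe v n (wittD p y z) := by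
  rw [wittD_eq_sum hp]
  refine hv.ge_neg (hv.ge_sum _ fun i hi => ?_)
  obtain ⟨hi0, hip⟩ := Finset.mem_Ioo.mp hi
  refine (hv.ge_mul (hv.ge_mul (hv.ge_pow hy i) (hv.ge_pow hz (p - i)))
    (hv.ge_natCast _)).mono ?_
  rw [Nat.cast_sub hip.le, add_zero]
  exact int_convex_bound (by exact_mod_cast hi0) (by exact_mod_cast hip) h1 h2

lemma IsDiscVal.ge_sum_pow_sub (hv : IsDiscVal v) (hp : p.Prime) {ι : Type*} (s : Finset ι)
    {f : ι → K} {n : ℤ} (h : ∀ i ∈ s, ValGe v n (f i)) :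
    ValGe v (v p + p * n) ((∑ i ∈ s, f i) ^ p - ∑ i ∈ s, f i ^ p) := by
  classical
  induction s using Finset.induction_on with
  | empty => simpa [hp.ne_zero] using valGe_zero _
  | insert a s ha ih =>
    have hs : ∀ i ∈ s, ValGe v n (f i) := fun i hi => h i (Finset.mem_insert_of_mem hi)
    rw [Finset.sum_insert ha, Finset.sum_insert ha, add_pow_eq_wittD hp]
    have h1 : f a ^ p + (∑ i ∈ s, f i) ^ p - p * wittD p (f a) (∑ i ∈ s, f i)
        - (f a ^ p + ∑ i ∈ s, f i ^ p) =
        ((∑ i ∈ s, f i) ^ p - ∑ i ∈ s, f i ^ p) - p * wittD p (f a) (∑ i ∈ s, f i) := by ring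
    rw [h1]
    exact hv.ge_sub (ih hs) (hv.ge_mul (valGe_self _)
      (hv.ge_wittD hp (h a (Finset.mem_insert_self a s)) (hv.ge_sum s hs)
        (by linarith) (by linarith)))

end WittPolynomial

lemma IsDiscVal.ge_intCast_pow_sub {K : Type*} [Field K] {p : ℕ} {v : K → ℤ}
    (hv : IsDiscVal v) (hp : p.Prime) (k : ℤ) :
    ValGe v (v p) ((k : K) ^ p - k) := by
  have := Fact.mk hp
  obtain ⟨c, hc⟩ : (p : ℤ) ∣ k ^ p - k := by
    rw [← ZMod.intCast_zmod_eq_zero_iff_dvd]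
    simp
  have h : (k : K) ^ p - k = p * c := by
    exact_mod_cast congrArg (Int.cast : ℤ → K) hc
  rw [h]
  exact (hv.ge_mul (valGe_self _) (hv.ge_intCast c)).mono (by simp)

/-- `D(x, 1) ^ p ≡ D(x ^ p, 1)` modulo `p`, with a bound in terms of `v x`. -/
lemma IsDiscVal.ge_wittD_pow_sub {K : Type*} [Field K] [CharZero K] {p : ℕ} {v : K → ℤ}
    (hv : IsDiscVal v) (hp : p.Prime) {x : K} {a : ℤ} (ha : a ≤ 0) (hx : ValGe v a x) :
    ValGe v (v p + p * ((p - 1) * a)) (wittD p x 1 ^ p - wittD p (x ^ p) 1) := by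
  obtain ⟨k, hk⟩ : ∃ k : ℕ → ℤ, ∀ i, (k i : K) = -((p.choose i / p : ℕ) : K) :=
    ⟨fun i => -((p.choose i / p : ℕ) : ℤ), fun i => by rw [Int.cast_neg, Int.cast_natCast]⟩
  have hsum : ∀ y : K, wittD p y 1 = ∑ i ∈ Finset.Ioo 0 p, (k i : K) * y ^ i := fun y => by
    rw [wittD_eq_sum hp, ← Finset.sum_neg_distrib]
    refine Finset.sum_congr rfl fun i _ => ?_
    rw [hk]
    ring
  have hpow : ∀ i ∈ Finset.Ioo 0 p, ValGe v ((p - 1) * a) (x ^ i) := fun i hi => by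
    have hip : (i : ℤ) + 1 ≤ p := by exact_mod_cast (Finset.mem_Ioo.mp hi).2
    exact (hv.ge_pow hx i).mono (by nlinarith)
  have h1 := hv.ge_sum_pow_sub hp (Finset.Ioo 0 p) (n := (p - 1) * a)
    (f := fun i => (k i : K) * x ^ i)
    fun i hi => (hv.ge_mul (hv.ge_intCast _) (hpow i hi)).mono (by simp)
  have h2 : ValGe v (v p + p * ((p - 1) * a)) (∑ i ∈ Finset.Ioo 0 p,
      (((k i : K) * x ^ i) ^ p - (k i : K) * (x ^ p) ^ i)) := by
    refine hv.ge_sum _ fun i hi => ?_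
    rw [mul_pow, pow_right_comm x p i, ← sub_mul]
    exact hv.ge_mul (hv.ge_intCast_pow_sub hp _) (hv.ge_pow (hpow i hi) p)
  rw [Finset.sum_sub_distrib] at h2
  rw [hsum x, hsum (x ^ p)]
  have h := hv.ge_add h1 h2
  rwa [sub_add_sub_cancel] at h

/-- The exact valuation of `D(x, u)` for `v x < 0` and `u` a unit. -/
lemma IsDiscVal.val_wittD_unit {K : Type*} [Field K] [CharZero K] {p : ℕ} {v : K → ℤ}
    (hv : IsDiscVal v) (hp : p.Prime) {x u : K} (hx : x ≠ 0) (hneg : v x < 0) (hu : u ≠ 0)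
    (hvu : v u = 0) : wittD p x u ≠ 0 ∧ v (wittD p x u) = (p - 1) * v x := by
  have hp1 := hp.one_lt
  have hmem : p - 1 ∈ Finset.Ioo 0 p := Finset.mem_Ioo.mpr ⟨by omega, by omega⟩
  have htop0 : x ^ (p - 1) * u ≠ 0 := mul_ne_zero (pow_ne_zero _ hx) hu
  have htop : v (x ^ (p - 1) * u) = (p - 1) * v x := by
    rw [hv.map_mul _ _ (pow_ne_zero _ hx) hu, hv.map_pow hx, hvu, Nat.cast_sub hp1.le]
    simp
  have hsum : x ^ (p - 1) * u ^ (p - (p - 1)) * ((p.choose (p - 1) / p : ℕ) : K) =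
      x ^ (p - 1) * u := by
    have h1 : p - (p - 1) = 1 := by omega
    have h2 : p.choose (p - 1) = p := by
      rw [Nat.choose_symm_of_eq_add (b := 1) (by omega), Nat.choose_one_right]
    rw [h1, h2, Nat.div_self hp.pos]
    simp
  rw [wittD_eq_sum hp, neg_ne_zero, hv.map_neg, ← Finset.add_sum_erase _ _ hmem, hsum, ← htop]
  refine hv.add_eq_left htop0 (hv.ge_sum _ fun i hi => ?_)
  obtain ⟨hne, hi⟩ := Finset.mem_erase.mp hi
  have hip : (i : ℤ) + 2 ≤ p := by
    have := (Finset.mem_Ioo.mp hi).2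
    exact_mod_cast (show i + 2 ≤ p by omega)
  refine (hv.ge_mul (hv.ge_mul (hv.ge_pow (valGe_self x) i) (hv.ge_pow (valGe_self u) (p - i)))
    (hv.ge_natCast _)).mono ?_
  rw [htop, hvu]
  nlinarith

/-- If `x` and `x + 1 + ε` have the same image under `y ↦ y ^ p - y` and `ε` is small, then
`v ε` is determined by `v x`. -/
lemma IsDiscVal.val_of_pow_sub_self_eq {K : Type*} [Field K] [CharZero K] {p : ℕ} {v : K → ℤ}
    (hv : IsDiscVal v) (hp : p.Prime) (hvp : 1 ≤ v p) {x ε : K} (hx : x ≠ 0) (hneg : v x < 0)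
    (hε : ValGe v 1 ε) (h : (x + 1 + ε) ^ p - (x + 1 + ε) = x ^ p - x) :
    ε ≠ 0 ∧ v ε = v p + (p - 1) * v x := by
  have hp0 : (p : K) ≠ 0 := Nat.cast_ne_zero.mpr hp.ne_zero
  have hp2 : (2 : ℤ) ≤ p := by exact_mod_cast hp.two_le
  obtain ⟨hu, hvu⟩ := hv.add_eq_left one_ne_zero (y := ε) (by rwa [hv.map_one, zero_add])
  rw [hv.map_one] at hvu
  obtain ⟨hD, hvD⟩ := hv.val_wittD_unit hp hx hneg hu hvu
  rw [add_assoc, add_pow_eq_wittD hp, add_pow_eq_wittD hp, one_pow] at h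
  have hw : -(p * wittD p x (1 + ε)) = ε + (p * wittD p 1 ε - ε ^ p) := by
    linear_combination h
  have hε0 : ε ≠ 0 := by
    rintro rfl
    apply mul_ne_zero hp0 hD
    rw [← neg_eq_zero, hw]
    simp [wittD, hp.ne_zero]
  have hge := hε hε0
  refine ⟨hε0, ?_⟩
  rw [← hvD, ← hv.map_mul _ _ hp0 hD, ← hv.map_neg (p * _), hw]
  refine (hv.add_eq_left hε0 (hv.ge_sub ?_ ?_)).2.symm
  · refine (hv.ge_mul (valGe_self _) (hv.ge_wittD hp hv.ge_one (valGe_self ε) (n := v ε)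
      ?_ ?_)).mono (by linarith)
    · nlinarith
    · linarith
  · exact (hv.ge_pow (valGe_self ε) p).mono (by nlinarith)

/-- Perturbing the first argument of `wittD` by an element of valuation at least `d`. -/
lemma IsDiscVal.ge_wittD_sub {K : Type*} [Field K] [CharZero K] {p : ℕ} {v : K → ℤ}
    (hv : IsDiscVal v) (hp : p.Prime) {x y z : K} {a b d : ℤ} (hba : b ≤ a)
    (hx : ValGe v a x) (hy : ValGe v a y) (hd : ValGe v d (x - y)) (hz : ValGe v b z) :
    ValGe v (d + (p - 1) * b) (wittD p x z - wittD p y z) := by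
  rw [wittD_eq_sum hp, wittD_eq_sum hp, neg_sub_neg, ← neg_sub (∑ i ∈ _, _), ← Finset.sum_sub_distrib]
  refine hv.ge_neg (hv.ge_sum _ fun i hi => ?_)
  obtain ⟨hi0, hip⟩ := Finset.mem_Ioo.mp hi
  obtain ⟨k, rfl⟩ : ∃ k, i = k + 1 := ⟨i - 1, by omega⟩
  rw [← sub_mul, ← sub_mul]
  refine (hv.ge_mul (hv.ge_mul (hv.ge_pow_sub_pow hx hy hd k) (hv.ge_pow hz _))
    (hv.ge_natCast _)).mono ?_
  rw [Nat.cast_sub hip.le]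
  push_cast
  nlinarith

section Galois

open Polynomial in
lemma natDegree_and_monic_X_pow_sub {K : Type*} [Field K] {p : ℕ} (hp : 2 ≤ p) (c : K) :
    (X ^ p - X - C c : K[X]).natDegree = p ∧ (X ^ p - X - C c : K[X]).Monic := by
  have hdeg : (X + C c : K[X]).degree < p := by
    rw [degree_X_add_C]
    exact_mod_cast hp
  rw [sub_sub]
  refine ⟨?_, monic_X_pow_sub hdeg⟩
  refine natDegree_eq_of_degree_eq_some ?_
  rw [degree_sub_eq_left_of_degree_lt (by rwa [degree_X_pow]), degree_X_pow]

open Polynomial in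
lemma val_le_roots_X_pow_sub {K : Type*} [Field K] {p : ℕ} (hp : 2 ≤ p) {c : K} {S : Finset K}
    (hS : ∀ s ∈ S, s ^ p - s = c) : S.val ≤ (X ^ p - X - C c : K[X]).roots := by
  rw [Multiset.le_iff_subset S.nodup]
  intro s hs
  rw [mem_roots (natDegree_and_monic_X_pow_sub hp c).2.ne_zero]
  simp [hS s hs]

open Polynomial in
lemma card_le_of_pow_sub_self_eq {K : Type*} [Field K] {p : ℕ} (hp : 2 ≤ p) {c : K}
    {S : Finset K} (hS : ∀ s ∈ S, s ^ p - s = c) : S.card ≤ p :=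
  (Multiset.card_le_card (val_le_roots_X_pow_sub hp hS)).trans
    ((card_roots' _).trans (natDegree_and_monic_X_pow_sub hp c).1.le)

open Polynomial in
lemma pow_sub_self_sub_eq_prod {K : Type*} [Field K] {p : ℕ} (hp : 2 ≤ p) {c : K}
    {S : Finset K} (hS : ∀ s ∈ S, s ^ p - s = c) (hcard : p ≤ S.card) (z : K) :
    z ^ p - z - c = ∏ s ∈ S, (z - s) := by
  obtain ⟨hdeg, hmonic⟩ := natDegree_and_monic_X_pow_sub hp c
  have hle := val_le_roots_X_pow_sub hp hS
  have hroots : S.val = (X ^ p - X - C c : K[X]).roots :=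
    Multiset.eq_of_le_of_card_le hle ((card_roots' _).trans (hdeg.le.trans hcard))
  have hprod := prod_multiset_X_sub_C_of_monic_of_roots_card_eq hmonic
    (by rw [← hroots, hdeg]; exact le_antisymm (card_le_of_pow_sub_self_eq hp hS) hcard)
  rw [← hroots] at hprod
  have := congrArg (eval z) hprod
  change eval z (∏ s ∈ S, (X - C s)) = _ at this
  rw [eval_prod] at this
  simpa using this.symm

variable {K L : Type*} [Field K] [Field L] [Algebra K L] {p : ℕ} {x y c : L} {a : K}

/-- For a Galois extension of degree `p ^ 2` generated by an Artin–Schreier tower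
`x ^ p - x = a`, `y ^ p - y = c`, both Artin–Schreier polynomials split, with roots conjugates
of `x` over `K`, respectively of `y` over `K(x)` up to a given automorphism `σ`. -/
lemma exists_conjugates_prod [IsGalois K L] [FiniteDimensional K L] (hp : 2 ≤ p)
    (hdeg : Module.finrank K L = p ^ 2) (hx : x ^ p - x = algebraMap K L a)
    (hy : y ^ p - y = c) (hc : ∀ σ : L ≃ₐ[K] L, σ x = x → σ c = c)
    (hgen : Algebra.adjoin K {x, y} = ⊤) :
    (∃ S : Finset L, (∀ r ∈ S, ∃ σ : L ≃ₐ[K] L, σ x = r) ∧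
      ∀ z, z ^ p - z - algebraMap K L a = ∏ r ∈ S, (z - r)) ∧
    ∀ σ : L ≃ₐ[K] L, ∃ S : Finset L,
      (∀ r ∈ S, ∃ τ : L ≃ₐ[K] L, τ x = σ x ∧ τ y = r) ∧
      ∀ z, z ^ p - z - σ c = ∏ r ∈ S, (z - r) := by
  classical
  let H := MulAction.stabilizer (L ≃ₐ[K] L) x
  have hH : ∀ τ : H, (τ : L ≃ₐ[K] L) x = x := fun τ => τ.2
  have : Fintype (MulAction.orbit (L ≃ₐ[K] L) x) := @Fintype.ofFinite _ (Set.finite_range _)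
  let O : Finset L := (MulAction.orbit (L ≃ₐ[K] L) x).toFinset
  let T : (L ≃ₐ[K] L) → Finset L :=
    fun σ => Finset.univ.image fun τ : H => σ ((τ : L ≃ₐ[K] L) y)
  have hO : ∀ r ∈ O, ∃ σ : L ≃ₐ[K] L, σ x = r := fun r hr => by
    simpa [O, MulAction.mem_orbit_iff] using hr
  have hOroot : ∀ r ∈ O, r ^ p - r = algebraMap K L a := fun r hr => by
    obtain ⟨σ, rfl⟩ := hO r hr
    rw [← map_pow, ← map_sub, hx, σ.commutes]
  have hTroot : ∀ σ, ∀ r ∈ T σ, r ^ p - r = σ c := fun σ r hr => by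
    obtain ⟨τ, -, rfl⟩ := Finset.mem_image.mp hr
    rw [← map_pow, ← map_pow, ← map_sub, ← map_sub, hy, hc τ (hH τ)]
  have hinj : ∀ τ₁ τ₂ : H, (τ₁ : L ≃ₐ[K] L) y = (τ₂ : L ≃ₐ[K] L) y → τ₁ = τ₂ :=
    fun τ₁ τ₂ h => by
    have : ((τ₁ : L ≃ₐ[K] L) : L →ₐ[K] L) = ((τ₂ : L ≃ₐ[K] L) : L →ₐ[K] L) :=
      AlgHom.ext_of_adjoin_eq_top hgen fun z hz => by
        rcases hz with rfl | rfl
        · simp [hH]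
        · simpa using h
    exact Subtype.ext (AlgEquiv.ext fun z => DFunLike.congr_fun this z)
  have hTcard : ∀ σ, (T σ).card = Fintype.card H := fun σ =>
    Finset.card_image_of_injective _ fun τ₁ τ₂ h => hinj τ₁ τ₂ (σ.injective h)
  have hOcard : O.card = Fintype.card (MulAction.orbit (L ≃ₐ[K] L) x) := Set.toFinset_card _
  have hmul : O.card * Fintype.card H = p ^ 2 := by
    rw [hOcard, MulAction.card_orbit_mul_card_stabilizer_eq_card_group, ← hdeg,
      ← IsGalois.card_aut_eq_finrank, Nat.card_eq_fintype_card]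
  have hOle : O.card ≤ p := card_le_of_pow_sub_self_eq hp hOroot
  have hHle : Fintype.card H ≤ p := hTcard 1 ▸ card_le_of_pow_sub_self_eq hp (hTroot 1)
  have hOge : p ≤ O.card := by nlinarith
  have hHge : p ≤ Fintype.card H := by nlinarith
  refine ⟨⟨O, hO, pow_sub_self_sub_eq_prod hp hOroot hOge⟩, fun σ => ⟨T σ, fun r hr => ?_,
    pow_sub_self_sub_eq_prod hp (hTroot σ) (by rwa [hTcard])⟩⟩
  obtain ⟨τ, -, rfl⟩ := Finset.mem_image.mp hr
  exact ⟨σ * τ, by simp [AlgEquiv.mul_apply, hH], by simp [AlgEquiv.mul_apply]⟩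

end Galois

/-- Proposition 3.4: there is `σ₁ ∈ Gal(K₂/K₀)` with
`(σ₁−1)x₁ = 1 + ε` and `(σ₁−1)x₂ = C₁ + δ'`, where
`C₁ = (x₁^p + 1 − (x₁+1)^p)/p`, `v₂(ε) = p²e₀ − p(p−1)b₁` and `v₂(δ') > 0`. -/
theorem statement6
    (p : ℕ) (hp : p.Prime)
    (K0 K2 : Type*) [Field K0] [Field K2] [CharZero K0] [CharZero K2]
    [Algebra K0 K2] [IsGalois K0 K2] [FiniteDimensional K0 K2]
    (hdeg : Module.finrank K0 K2 = p ^ 2)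
    (hcyc : IsCyclic (K2 ≃ₐ[K0] K2))
    (v0 : K0 → ℤ) (v2 : K2 → ℤ)
    (hv0 : IsDiscVal v0) (hv2 : IsDiscVal v2)
    (e0 : ℤ) (he0 : e0 = v0 (p : K0)) (he0pos : 1 ≤ e0)
    (hram : ∀ x : K0, x ≠ 0 → v2 (algebraMap K0 K2 x) = (p : ℤ) ^ 2 * v0 x)
    (a1 μ a2 : K0) (ha1 : a1 ≠ 0) (hμ0 : μ ≠ 0)
    (hwitt : ∀ y : K0, y ^ p - y ≠ a1)
    (hnd : ¬ ((p : ℤ) ∣ v0 a1))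
    (hneg : v0 a1 < 0)
    (hbd : -((p : ℤ) * e0) < ((p : ℤ) ^ 2 - 1) * v0 a1)
    (m : ℤ) (hm : m = -v0 μ) (hmpos : 0 < m)
    (hmu1 : (p : ℤ) ^ 2 * (p - 1) * m - (2 * p * (p - 1) + 1) * v0 a1 < (p : ℤ) ^ 2 * e0)
    (hmu2 : -(((p : ℤ) ^ 2 - 1) * v0 a1) < (p : ℤ) ^ 2 * m)
    (ha2 : a2 = μ ^ p * a1)
    (x1 x2 : K2)
    (hx1 : x1 ^ p - x1 = algebraMap K0 K2 a1)
    (hx2 : x2 ^ p - x2 = algebraMap K0 K2 a2 +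
      (x1 ^ p + (algebraMap K0 K2 a1) ^ p - (x1 + algebraMap K0 K2 a1) ^ p) / (p : K2))
    (hgen : Algebra.adjoin K0 {x1, x2} = ⊤)
    (b1 b2 : ℤ) (hb1 : b1 = -v0 a1) (hb2 : b2 = (p : ℤ) ^ 2 * m + b1) :
    ∃ σ1 : K2 ≃ₐ[K0] K2, ∃ ε δ' : K2,
      σ1 x1 = x1 + 1 + ε ∧
      σ1 x2 = x2 + (x1 ^ p + 1 - (x1 + 1) ^ p) / (p : K2) + δ' ∧
      ε ≠ 0 ∧ v2 ε = (p : ℤ) ^ 2 * e0 - p * (p - 1) * b1 ∧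
      (δ' = 0 ∨ 0 < v2 δ') := by
  have hp2 : (2 : ℤ) ≤ p := by exact_mod_cast hp.two_le
  have hp00 : (p : K0) ≠ 0 := Nat.cast_ne_zero.mpr hp.ne_zero
  obtain rfl : a2 = μ ^ p * a1 := ha2
  have hb1pos : 1 ≤ b1 := by omega
  have hva1 : v0 a1 = -b1 := by omega
  rw [hva1] at hbd hmu1 hmu2
  have hvp : v2 (p : K2) = (p : ℤ) ^ 2 * e0 := by
    rw [← map_natCast (algebraMap K0 K2), hram _ hp00, he0]
  have hvp1 : 1 ≤ v2 (p : K2) := by rw [hvp]; nlinarith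
  have hA0 : algebraMap K0 K2 a1 ≠ 0 := by simpa using ha1
  have hvA : v2 (algebraMap K0 K2 a1) = -((p : ℤ) ^ 2 * b1) := by
    rw [hram _ ha1, hva1]; ring
  have hvB : v2 (algebraMap K0 K2 (μ ^ p * a1)) = -((p : ℤ) ^ 2 * (p * m + b1)) := by
    rw [hram _ (mul_ne_zero (pow_ne_zero _ hμ0) ha1), hv0.map_mul _ _ (pow_ne_zero _ hμ0) ha1,
      hv0.map_pow hμ0, hva1, show v0 μ = -m by omega]
    ring
  change x2 ^ p - x2 = algebraMap K0 K2 (μ ^ p * a1) + wittD p x1 (algebraMap K0 K2 a1) at hx2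
  have hmap : ∀ σ : K2 ≃ₐ[K0] K2,
      σ (algebraMap K0 K2 (μ ^ p * a1) + wittD p x1 (algebraMap K0 K2 a1)) =
        algebraMap K0 K2 (μ ^ p * a1) + wittD p (σ x1) (algebraMap K0 K2 a1) := fun σ => by
    rw [map_add, σ.commutes]
    simp [wittD]
  obtain ⟨⟨S, hSconj, hSprod⟩, hT⟩ := exists_conjugates_prod hp.two_le hdeg hx1 hx2
    (fun σ hσ => by rw [hmap, hσ]) hgen
  generalize algebraMap K0 K2 (μ ^ p * a1) = B at *
  generalize algebraMap K0 K2 a1 = A at *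
  have hx10 : x1 ≠ 0 := by
    rintro rfl
    apply hA0
    rw [← hx1]
    simp [hp.ne_zero]
  have hx1neg : v2 x1 < 0 := by
    by_contra! h
    have hge : ValGe v2 0 x1 := fun _ => h
    have := hv2.ge_sub ((hv2.ge_pow hge p).mono (m := 0) (by simp)) hge
    rw [hx1] at this
    have := this hA0
    nlinarith
  have hvx1 : v2 x1 = -(p * b1) := by
    have h := (hv2.pow_sub_self hp.two_le hx10 hx1neg).2
    rw [hx1, hvA] at h
    have hpz : (p : ℤ) ≠ 0 := by linarith
    apply mul_left_cancel₀ hpz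
    linarith
  have hpb : 0 ≤ (p : ℤ) * b1 := by positivity
  have hpb2 : 0 ≤ p * ((p - 1) * b1) :=
    mul_nonneg (by linarith) (mul_nonneg (by linarith) (by linarith))
  have hpb3 : 0 ≤ p * (p * ((p - 1) * b1)) := mul_nonneg (by linarith) hpb2
  have hpe : 0 < p * ((p : ℤ) * e0 - ((p : ℤ) ^ 2 - 1) * b1) :=
    mul_pos (by linarith) (by linarith)
  have hpm : 0 ≤ p * ((p : ℤ) ^ 2 * m - ((p : ℤ) ^ 2 - 1) * b1) :=
    mul_nonneg (by linarith) (by linarith)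
  have hx1ge : ValGe v2 (-(p * b1)) x1 := fun _ => hvx1.ge
  have hAge : ValGe v2 (-((p : ℤ) ^ 2 * b1)) A := fun _ => hvA.ge
  have hC1 : ValGe v2 (-((p - 1) * (p * b1))) (wittD p x1 1) :=
    hv2.ge_wittD hp hx1ge hv2.ge_one (by nlinarith) (by linarith)
  have hpm0 : 0 ≤ (p : ℤ) ^ 2 * m := by positivity
  have hx2ge : ValGe v2 (-((p : ℤ) ^ 2 * m + p * b1)) x2 := by
    refine hv2.ge_of_pow_sub_self hp.two_le (by linarith) ?_
    rw [hx2]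
    refine hv2.ge_add (fun _ => ?_) (hv2.ge_wittD hp hx1ge hAge ?_ ?_)
    · rw [hvB]; linarith
    · linarith
    · linarith
  -- the automorphism on `x1`
  obtain ⟨r, hr, hr1⟩ := hv2.exists_ge_one_of_prod S (f := fun r => x1 + 1 - r) (by
    rw [← hSprod, add_pow_eq_wittD hp, ← hx1]
    have h : x1 ^ p + 1 ^ p - p * wittD p x1 1 - (x1 + 1) - (x1 ^ p - x1) =
        -(p * wittD p x1 1) := by ring
    rw [h]
    refine hv2.ge_neg ((hv2.ge_mul (valGe_self _) hC1).mono ?_)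
    rw [hvp]
    linarith)
  obtain ⟨σ, rfl⟩ := hSconj r hr
  have hε1 : ValGe v2 1 (σ x1 - (x1 + 1)) := by simpa using hv2.ge_neg hr1
  have hσx1 : σ x1 ^ p - σ x1 = A := by
    have := hSprod (σ x1)
    rw [Finset.prod_eq_zero hr (sub_self _)] at this
    exact sub_eq_zero.mp this
  obtain ⟨hε0, hvε⟩ := hv2.val_of_pow_sub_self_eq hp hvp1 hx10 hx1neg hε1 (by
    rw [add_sub_cancel, hσx1, hx1])
  rw [hvp, hvx1] at hvε
  -- the automorphism on `x2`
  obtain ⟨T, hTconj, hTprod⟩ := hT σ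
  obtain ⟨s, hs, hs1⟩ := hv2.exists_ge_one_of_prod T (f := fun s => x2 + wittD p x1 1 - s) (by
    have hcoc := wittD_cocycle p x1 A 1
    rw [show x1 + A = x1 ^ p by rw [← hx1]; ring] at hcoc
    rw [← hTprod, hmap, add_pow_eq_wittD hp]
    have h : x2 ^ p + wittD p x1 1 ^ p - p * wittD p x2 (wittD p x1 1)
        - (x2 + wittD p x1 1) - (B + wittD p (σ x1) A) =
        (wittD p x1 1 ^ p - wittD p (x1 ^ p) 1) - p * wittD p x2 (wittD p x1 1)
        - (wittD p (σ x1) A - wittD p (x1 + 1) A) := by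
      linear_combination hx2 + hcoc
    rw [h]
    have hx11 : ValGe v2 (-(p * b1)) (x1 + 1) :=
      hv2.ge_add hx1ge (hv2.ge_one.mono (by linarith))
    have hσge : ValGe v2 (-(p * b1)) (σ x1) := by
      have := hv2.ge_add hx11 (hε1.mono (by linarith))
      rwa [add_sub_cancel] at this
    refine hv2.ge_sub (hv2.ge_sub ?_ ?_) ?_
    · refine (hv2.ge_wittD_pow_sub hp (by linarith) hx1ge).mono ?_
      rw [hvp]
      linarith
    · refine (hv2.ge_mul (valGe_self _) (hv2.ge_wittD hp hx2ge hC1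
        (n := 1 - (p : ℤ) ^ 2 * e0) ?_ ?_)).mono (by rw [hvp]; linarith)
      · have h1 : 0 ≤ (p - 2) * ((p : ℤ) ^ 2 * m - ((p : ℤ) ^ 2 - 1) * b1) :=
          mul_nonneg (by linarith) (by linarith)
        have h2 : 0 ≤ (2 * p - 3) * ((p - 1) * b1) :=
          mul_nonneg (by linarith) (mul_nonneg (by linarith) (by linarith))
        linarith
      · linarith
    · refine (hv2.ge_wittD_sub hp (by linarith) hσge hx11 (fun _ => hvε.ge) hAge).mono ?_
      linarith)
  obtain ⟨τ, hτ1, hτ2⟩ := hTconj s hs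
  refine ⟨τ, σ x1 - (x1 + 1), s - (x2 + wittD p x1 1), ?_, ?_, hε0, ?_, ?_⟩
  · rw [hτ1]; ring
  · rw [hτ2, wittD, one_pow]; ring
  · rw [hvε]; ring
  · have h : ValGe v2 1 (s - (x2 + wittD p x1 1)) := by simpa using hv2.ge_neg hs1
    exact or_iff_not_imp_left.mpr fun hne => h hne
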